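/- arXiv:1608.07896 — 10 statements merged into one kernel-verified Lean document; each statement's English description precedes it below -/
import Mathlib

section
/- Let ℓ ≥ 2 be an integer and let m, n, m', n' be integers with 1 ≤ m ≤ ℓ, 1 ≤ m' ≤ ℓ, 1 ≤ n ≤ ℓ+1, 1 ≤ n' ≤ ℓ+1. Then h̃_{m,n} = h̃_{m',n'} if and only if either (m = m' and n = n') or (m + m' = ℓ+1 and n + n' = ℓ+2). -/
/-!
Equality of the two values means that `m(ℓ+2) - n(ℓ+1)` and `m'(ℓ+2) - n'(ℓ+1)` agree up to sign.
Since `ℓ+2 = (ℓ+1) + 1`, this says `m ∓ m' = (ℓ+1)k` with `k = (n ∓ n') - (m ∓ m')`. The bounds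
`|m - m'| < ℓ+1` and `0 < m + m' < 2(ℓ+1)` force `k = 0` for equal signs and `k = 1` for opposite
signs.
-/


/-- For `ℓ ≥ 2` and `1 ≤ m, m' ≤ ℓ`, `1 ≤ n, n' ≤ ℓ+1`, one has
`h̃_{m,n} = h̃_{m',n'}` iff `(m,n) = (m',n')` or `(m+m', n+n') = (ℓ+1, ℓ+2)`. -/
theorem htilde_eq_iff (ℓ m n m' n' : ℤ) (hℓ : 2 ≤ ℓ)
    (hm1 : 1 ≤ m) (hm2 : m ≤ ℓ) (hm'1 : 1 ≤ m') (hm'2 : m' ≤ ℓ)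
    (hn1 : 1 ≤ n) (hn2 : n ≤ ℓ + 1) (hn'1 : 1 ≤ n') (hn'2 : n' ≤ ℓ + 1) :
    (m * (ℓ + 2) - n * (ℓ + 1)) ^ 2 - 1 = (m' * (ℓ + 2) - n' * (ℓ + 1)) ^ 2 - 1
      ↔ (m = m' ∧ n = n') ∨ (m + m' = ℓ + 1 ∧ n + n' = ℓ + 2) := by
  constructor
  · intro h
    have hsq : (m * (ℓ + 2) - n * (ℓ + 1)) ^ 2 = (m' * (ℓ + 2) - n' * (ℓ + 1)) ^ 2 := by
      linarith
    rcases sq_eq_sq_iff_eq_or_eq_neg.mp hsq with h | h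
    · left
      have hk : m - m' = (ℓ + 1) * ((n - n') - (m - m')) := by linear_combination h
      have h1 : (n - n') - (m - m') < 1 := by
        by_contra! hc
        nlinarith
      have h2 : -1 < (n - n') - (m - m') := by
        by_contra! hc
        nlinarith
      have h0 : (n - n') - (m - m') = 0 := by omega
      rw [h0, mul_zero] at hk
      omega
    · right
      have hk : m + m' = (ℓ + 1) * ((n + n') - (m + m')) := by linear_combination h
      have h1 : (n + n') - (m + m') < 2 := by
        by_contra! hc
        nlinarith
      have h2 : 0 < (n + n') - (m + m') := by
        by_contra! hc
        nlinarith
      have h0 : (n + n') - (m + m') = 1 := by omega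
      rw [h0, mul_one] at hk
      omega
  · rintro (⟨rfl, rfl⟩ | ⟨h1, h2⟩)
    · rfl
    · obtain rfl : m' = ℓ + 1 - m := by omega
      obtain rfl : n' = ℓ + 2 - n := by omega
      ring
end

section
/- Let ℓ ≥ 2 be an integer. The integers h̃_{m,n} = (m(ℓ+2) − n(ℓ+1))² − 1, for pairs (m,n) with 1 ≤ n ≤ m ≤ ℓ, are pairwise distinct; equivalently, the map (m,n) ↦ h̃_{m,n} is injective on the set of pairs (m,n) with 1 ≤ n ≤ m ≤ ℓ, so there are exactly ℓ(ℓ+1)/2 distinct such values. -/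
/-! Write `m(ℓ+2) − n(ℓ+1) = (m − n)(ℓ+1) + m`. On the given set `m − n ≥ 0` and
`1 ≤ m ≤ ℓ`, so this integer is nonnegative, hence determined by its square, and `m` and `m − n`
are its remainder and quotient in the division by `ℓ + 1`. -/

/-- For `ℓ ≥ 2`, the map `(m,n) ↦ h̃_{m,n} = (m(ℓ+2) − n(ℓ+1))² − 1` is injective on the
set of pairs `(m,n)` with `1 ≤ n ≤ m ≤ ℓ`. -/
theorem htilde_injOn (ℓ : ℤ) (hℓ : 2 ≤ ℓ) :
    Set.InjOn (fun q : ℤ × ℤ => (q.1 * (ℓ + 2) - q.2 * (ℓ + 1)) ^ 2 - 1)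
      {q : ℤ × ℤ | 1 ≤ q.2 ∧ q.2 ≤ q.1 ∧ q.1 ≤ ℓ} := by
  have key : ∀ m n : ℤ, m * (ℓ + 2) - n * (ℓ + 1) = m + (ℓ + 1) * (m - n) := by
    intro m n; ring
  have nonneg : ∀ m n : ℤ, 1 ≤ n → n ≤ m → 0 ≤ m + (ℓ + 1) * (m - n) := by
    intro m n h1 h2
    have := mul_nonneg (by lia : 0 ≤ ℓ + 1) (sub_nonneg.2 h2)
    lia
  rintro ⟨m, n⟩ ⟨h1, h2, h3⟩ ⟨m', n'⟩ ⟨h1', h2', h3'⟩ h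
  simp only [key, sub_left_inj] at h h1 h2 h3 h1' h2' h3'
  have heq := (pow_left_inj₀ (nonneg m n h1 h2) (nonneg m' n' h1' h2') two_ne_zero).1 h
  have hm : m = m' := by
    have hmod := congrArg (· % (ℓ + 1)) heq
    simpa only [Int.add_mul_emod_self_left, Int.emod_eq_of_lt (by lia : 0 ≤ m) (by lia : m < ℓ + 1),
      Int.emod_eq_of_lt (by lia : 0 ≤ m') (by lia : m' < ℓ + 1)] using hmod
  subst hm
  have hn : m - n = m - n' :=
    mul_left_cancel₀ (by lia : ℓ + 1 ≠ 0) (add_left_cancel heq)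
  rw [Prod.mk.injEq]
  exact ⟨rfl, by lia⟩
end

section
/- Let ℓ ≥ 2 be an integer and let p be a prime with p > 2ℓ² + ℓ − 3. Then for all pairs of integers (m,n) and (m',n') with 1 ≤ n ≤ m ≤ ℓ, 1 ≤ n' ≤ m' ≤ ℓ, and (m,n) ≠ (m',n'), the prime p does not divide h̃_{m,n} − h̃_{m',n'}, where h̃_{m,n} = (m(ℓ+2) − n(ℓ+1))² − 1. -/
/-!
Put `a = m(ℓ+2) − n(ℓ+1) = (m − n)(ℓ+1) + m`, and `a'` likewise. Then `h̃_{m,n} − h̃_{m',n'}`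
factors as `(a − a')(a + a')`, so it suffices that neither factor is divisible by `p`.
Since `0 ≤ m < ℓ+1`, the numbers `m − n` and `m` are the quotient and the remainder of `a`
modulo `ℓ+1`, so `a ≠ a'`. Moreover `a, a' > 0`, hence `0 < |a − a'| < a + a'`. The largest
possible value of `a` is `ℓ²+ℓ−1`, attained only at `(ℓ,1)`, and every other value is at most
`ℓ²−2`, so `a + a' ≤ 2ℓ²+ℓ−3 < p` for distinct pairs.
-/

lemma htilde_root_pos {ℓ m n : ℤ} (hn : 1 ≤ n) (hnm : n ≤ m) (hm : m ≤ ℓ) :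
    0 < m * (ℓ + 2) - n * (ℓ + 1) := by
  nlinarith [mul_nonneg (sub_nonneg.2 hnm) (by linarith : (0 : ℤ) ≤ ℓ + 1)]

lemma htilde_root_le_of_sub_le {ℓ m n k : ℤ} (hℓ : 2 ≤ ℓ) (hm : m ≤ ℓ) (hk : m - n ≤ k) :
    m * (ℓ + 2) - n * (ℓ + 1) ≤ k * (ℓ + 1) + ℓ := by
  nlinarith [mul_le_mul_of_nonneg_right hk (by linarith : (0 : ℤ) ≤ ℓ + 1)]

/-- Away from the maximiser `(ℓ, 1)` one has `m − n ≤ ℓ − 2`, which lowers the bound on the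
root from `ℓ² + ℓ − 1` to `ℓ² − 2`. -/
lemma htilde_root_le_of_ne {ℓ m n : ℤ} (hℓ : 2 ≤ ℓ) (hn : 1 ≤ n) (hm : m ≤ ℓ)
    (hne : (m, n) ≠ (ℓ, 1)) : m * (ℓ + 2) - n * (ℓ + 1) ≤ ℓ ^ 2 - 2 := by
  have hk : m - n ≤ ℓ - 2 := by
    by_contra! h
    exact hne (Prod.ext (by dsimp only; omega) (by dsimp only; omega))
  nlinarith [htilde_root_le_of_sub_le hℓ hm hk]

/-- The quotient and remainder modulo `ℓ + 1` recover `m − n` and `m` from the root. -/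
lemma htilde_root_inj {ℓ m n m' n' : ℤ} (hm0 : 1 ≤ m) (hm : m ≤ ℓ) (hm0' : 1 ≤ m') (hm' : m' ≤ ℓ)
    (h : m * (ℓ + 2) - n * (ℓ + 1) = m' * (ℓ + 2) - n' * (ℓ + 1)) : (m, n) = (m', n') := by
  have hdvd : ℓ + 1 ∣ m - m' := ⟨(m' - n') - (m - n), by linear_combination h⟩
  have hmm : m - m' = 0 := Int.eq_zero_of_abs_lt_dvd hdvd (by rw [abs_lt]; constructor <;> linarith)
  obtain rfl : m = m' := by linarith
  have hnn : n = n' := mul_right_cancel₀ (by linarith : ℓ + 1 ≠ 0) (by linarith)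
  rw [hnn]

/-- For `ℓ ≥ 2` and a prime `p > 2ℓ² + ℓ − 3`, the prime `p` does not divide
`h̃_{m,n} − h̃_{m',n'}` for any distinct pairs `(m,n) ≠ (m',n')` with
`1 ≤ n ≤ m ≤ ℓ` and `1 ≤ n' ≤ m' ≤ ℓ`. -/
theorem prime_not_dvd_htilde_sub (ℓ : ℤ) (hℓ : 2 ≤ ℓ) (p : ℕ) (hp : p.Prime)
    (hbig : 2 * ℓ ^ 2 + ℓ - 3 < (p : ℤ)) :
    ∀ m n m' n' : ℤ, 1 ≤ n → n ≤ m → m ≤ ℓ → 1 ≤ n' → n' ≤ m' → m' ≤ ℓ →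
      (m, n) ≠ (m', n') →
      ¬ ((p : ℤ) ∣ ((m * (ℓ + 2) - n * (ℓ + 1)) ^ 2 - 1)
          - ((m' * (ℓ + 2) - n' * (ℓ + 1)) ^ 2 - 1)) := by
  intro m n m' n' hn hnm hm hn' hnm' hm' hne hdvd
  have hpos := htilde_root_pos hn hnm hm
  have hpos' := htilde_root_pos hn' hnm' hm'
  have hsum : (m * (ℓ + 2) - n * (ℓ + 1)) + (m' * (ℓ + 2) - n' * (ℓ + 1)) < p := by
    by_cases h : (m, n) = (ℓ, 1)
    · have h1 := htilde_root_le_of_sub_le hℓ hm (show m - n ≤ ℓ - 1 by omega)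
      have h2 := htilde_root_le_of_ne hℓ hn' hm' (fun h' => hne (h.trans h'.symm))
      nlinarith
    · have h1 := htilde_root_le_of_ne hℓ hn hm h
      have h2 := htilde_root_le_of_sub_le hℓ hm' (show m' - n' ≤ ℓ - 1 by omega)
      nlinarith
  have hinj := fun h => hne
    (htilde_root_inj (n := n) (n' := n') (hn.trans hnm) hm (hn'.trans hnm') hm' h)
  generalize m * (ℓ + 2) - n * (ℓ + 1) = a at *
  generalize m' * (ℓ + 2) - n' * (ℓ + 1) = b at *
  rw [show a ^ 2 - 1 - (b ^ 2 - 1) = (a - b) * (a + b) by ring] at hdvd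
  rcases (Nat.prime_iff_prime_int.1 hp).dvd_or_dvd hdvd with h | h
  · have := Int.eq_zero_of_abs_lt_dvd h (by rw [abs_lt]; constructor <;> linarith)
    exact hinj (by linarith)
  · have := Int.le_of_dvd (by linarith) h
    linarith
end

section
/- Let ℓ ≥ 2 be an integer and let p be a prime with p > 2ℓ² + ℓ − 3. Then p does not divide 4(ℓ+1)(ℓ+2), and the images in the field ZMod p (via the canonical rational cast) of the rational numbers h_{m,n} = ((m(ℓ+2) − n(ℓ+1))² − 1)/(4(ℓ+1)(ℓ+2)), for pairs (m,n) with 1 ≤ n ≤ m ≤ ℓ, are pairwise distinct. -/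
/-!
Write `a(m,n) = m(ℓ+2) − n(ℓ+1) = (m−n)(ℓ+1) + m`. On the triangle `1 ≤ n ≤ m ≤ ℓ` the number `m`
is the remainder of `a` modulo `ℓ+1` and `m − n` the quotient, so `a` is injective there. Its
largest value is `ℓ² + ℓ − 1`, at `(ℓ,1)`, and every other value is at most `ℓ² − 2`; hence two
distinct pairs have values `a ≠ b` with `0 < a + b ≤ 2ℓ² + ℓ − 3 < p`, and also `|a − b| < p`.
Thus the prime `p` divides neither factor of `a² − b² = (a − b)(a + b)`. As `p` exceeds both `4`
and `ℓ + 2`, the common denominator is invertible modulo `p`, so equal images of `h` would force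
`p ∣ a² − b²`.
-/

/-- The rational cast to `ZMod p` respects a fraction of integers whose denominator, reduced or
not, is nonzero modulo `p`. -/
lemma ratCast_intDiv {p : ℕ} [Fact p.Prime] (A D : ℤ) (hD : (D : ZMod p) ≠ 0) :
    (((A : ℚ) / (D : ℚ) : ℚ) : ZMod p) = (A : ZMod p) / (D : ZMod p) := by
  rw [Rat.cast_div_of_ne_zero (by simp) (by simpa using hD)]
  simp

/-- The value `a(m,n)` is at least `1`, and at most `ℓ² − 2` away from the corner `(ℓ,1)`. -/
lemma value_bounds {ℓ m n : ℤ} (hn : 1 ≤ n) (hnm : n ≤ m) (hm : m ≤ ℓ) :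
    1 ≤ m * (ℓ + 2) - n * (ℓ + 1) ∧
      (m = ℓ ∧ n = 1 ∨ m * (ℓ + 2) - n * (ℓ + 1) ≤ ℓ ^ 2 - 2) := by
  refine ⟨by nlinarith, ?_⟩
  by_cases h : m - n ≤ ℓ - 2
  · right; nlinarith
  · left; omega

/-- Uniqueness of quotient and remainder on division by `ℓ + 1`. -/
lemma value_injective {ℓ m n m' n' : ℤ} (hn : 1 ≤ n) (hnm : n ≤ m) (hm : m ≤ ℓ)
    (hn' : 1 ≤ n') (hnm' : n' ≤ m') (hm' : m' ≤ ℓ)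
    (h : m * (ℓ + 2) - n * (ℓ + 1) = m' * (ℓ + 2) - n' * (ℓ + 1)) : m = m' ∧ n = n' := by
  have hmm : m = m' := by
    have hmod : m % (ℓ + 1) = m' % (ℓ + 1) :=
      Int.modEq_iff_dvd.2 ⟨(m - n) - (m' - n'), by linarith⟩
    rwa [Int.emod_eq_of_lt (by omega) (by omega), Int.emod_eq_of_lt (by omega) (by omega)] at hmod
  subst hmm
  exact ⟨rfl, mul_right_cancel₀ (by omega : ℓ + 1 ≠ 0) (by linarith)⟩

/-- For `ℓ ≥ 2` and a prime `p > 2ℓ² + ℓ − 3`, the prime `p` does not divide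
`4(ℓ+1)(ℓ+2)`, and the images in `ZMod p` of the rational numbers
`h_{m,n} = ((m(ℓ+2) − n(ℓ+1))² − 1)/(4(ℓ+1)(ℓ+2))` for `1 ≤ n ≤ m ≤ ℓ`
are pairwise distinct. -/
theorem h_pairwise_distinct_zmod (ℓ : ℤ) (hℓ : 2 ≤ ℓ) (p : ℕ) [Fact p.Prime]
    (hbig : 2 * ℓ ^ 2 + ℓ - 3 < (p : ℤ)) :
    ¬ ((p : ℤ) ∣ 4 * (ℓ + 1) * (ℓ + 2)) ∧
    Set.InjOn
      (fun q : ℤ × ℤ =>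
        (((((q.1 : ℚ) * ((ℓ : ℚ) + 2) - (q.2 : ℚ) * ((ℓ : ℚ) + 1)) ^ 2 - 1)
            / (4 * ((ℓ : ℚ) + 1) * ((ℓ : ℚ) + 2)) : ℚ) : ZMod p))
      {q : ℤ × ℤ | 1 ≤ q.2 ∧ q.2 ≤ q.1 ∧ q.1 ≤ ℓ} := by
  have hp : Prime (p : ℤ) := Nat.prime_iff_prime_int.mp Fact.out
  have hden : ¬ ((p : ℤ) ∣ 4 * (ℓ + 1) * (ℓ + 2)) := by
    intro h
    rcases hp.dvd_or_dvd h with h | h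
    · rcases hp.dvd_or_dvd h with h | h
      · have := Int.le_of_dvd (by norm_num) h
        nlinarith
      · have := Int.le_of_dvd (by omega) h
        nlinarith
    · have := Int.le_of_dvd (by omega) h
      nlinarith
  refine ⟨hden, ?_⟩
  rintro ⟨m, n⟩ ⟨hn, hnm, hm⟩ ⟨m', n'⟩ ⟨hn', hnm', hm'⟩ heq
  dsimp only at hn hnm hm hn' hnm' hm' heq
  by_contra hne
  have hD : ((4 * (ℓ + 1) * (ℓ + 2) : ℤ) : ZMod p) ≠ 0 := by
    rwa [Ne, ZMod.intCast_zmod_eq_zero_iff_dvd]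
  have hcast : ∀ m n : ℤ,
      (((((m : ℚ) * ((ℓ : ℚ) + 2) - (n : ℚ) * ((ℓ : ℚ) + 1)) ^ 2 - 1)
            / (4 * ((ℓ : ℚ) + 1) * ((ℓ : ℚ) + 2)) : ℚ) : ZMod p)
        = (((m * (ℓ + 2) - n * (ℓ + 1)) ^ 2 - 1 : ℤ) : ZMod p)
          / ((4 * (ℓ + 1) * (ℓ + 2) : ℤ) : ZMod p) := by
    intro m n
    rw [← ratCast_intDiv _ _ hD]
    push_cast
    rfl
  rw [hcast, hcast, div_left_inj' hD, ZMod.intCast_eq_intCast_iff_dvd_sub] at heq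
  obtain ⟨ha, ha'⟩ := value_bounds hn hnm hm
  obtain ⟨hb, hb'⟩ := value_bounds hn' hnm' hm'
  have hab : m * (ℓ + 2) - n * (ℓ + 1) ≠ m' * (ℓ + 2) - n' * (ℓ + 1) := fun h =>
    hne (Prod.ext_iff.2 (value_injective hn hnm hm hn' hnm' hm' h))
  have hsum : (m * (ℓ + 2) - n * (ℓ + 1)) + (m' * (ℓ + 2) - n' * (ℓ + 1))
      ≤ 2 * ℓ ^ 2 + ℓ - 3 := by
    rcases ha' with ⟨rfl, rfl⟩ | ha' <;> rcases hb' with ⟨h1, h2⟩ | hb'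
    · exact absurd (by rw [h1, h2]) hne
    · nlinarith
    · subst h1 h2; nlinarith
    · nlinarith
  generalize m * (ℓ + 2) - n * (ℓ + 1) = a at *
  generalize m' * (ℓ + 2) - n' * (ℓ + 1) = b at *
  have hfac : (p : ℤ) ∣ (b - a) * (a + b) := by
    convert heq using 1; ring
  rcases hp.dvd_or_dvd hfac with h | h
  -- Since `a, b > 0`, the difference is smaller in absolute value than the sum.
  · have hlt : |b - a| < (p : ℤ) := abs_lt.2 ⟨by linarith, by linarith⟩
    exact hab (sub_eq_zero.1 (Int.eq_zero_of_abs_lt_dvd h hlt)).symm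
  · have := Int.le_of_dvd (by linarith) h
    linarith
end

section
/- Let ℓ ≥ 2 be an integer. The set of nonzero values |D⁺_{m,n;m',n'}| = |(m+m')(ℓ+2) − (n+n')(ℓ+1)|, as (m,n,m',n') ranges over integers with 1 ≤ m ≤ ℓ, 1 ≤ m' ≤ ℓ, 1 ≤ n ≤ ℓ+1, 1 ≤ n' ≤ ℓ+1, equals the union of the integer interval [1, ℓ²+ℓ−2] with the integer intervals B_ℓ(a) = [ℓ²+ℓ+a(ℓ+2), ℓ²+2ℓ−1+a(ℓ+1)] for a = 0, 1, …, ℓ−1. -/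
/-!
With `M = m + m'`, `N = n + n'` and `d = M - N`, the value is `D⁺ = d (ℓ + 1) + M`, where `M` runs
over `[2, 2ℓ]` and `N` over `[2, 2ℓ + 2]` (`exists_split`). The reflection
`(M, N) ↦ (2ℓ + 2 - M, 2ℓ + 4 - N)` negates `D⁺`, so only its positive values matter. For fixed
`d ≥ 0` the constraint `N ≥ 2` says `M ≥ d + 2`, and the values fill
`[d (ℓ + 2) + 2, d (ℓ + 1) + 2ℓ]`, with `d ≤ 2ℓ - 2`. For `d = a + ℓ - 1` with `a ≥ 0` this is
`B_ℓ(a)`. For `0 ≤ d ≤ ℓ - 2` consecutive intervals overlap or abut, and together with the positive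
values `[1, ℓ - 1]` coming from `d = -1` they fill `[1, ℓ² + ℓ - 2]`
(`pos_value_iff`).
-/

lemma exists_split {c M : ℤ} (h2 : 2 ≤ M) (hM : M ≤ 2 * c) :
    ∃ x y : ℤ, 1 ≤ x ∧ x ≤ c ∧ 1 ≤ y ∧ y ≤ c ∧ x + y = M :=
  ⟨min c (M - 1), M - min c (M - 1), by omega, by omega, by omega, by omega, by omega⟩

/-- The positive values of `D⁺`, in terms of the sums `M = m + m'` and `N = n + n'`. -/
lemma pos_value_iff {ℓ k : ℤ} (hℓ : 2 ≤ ℓ) (hk : 1 ≤ k) :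
    (∃ M N : ℤ, 2 ≤ M ∧ M ≤ 2 * ℓ ∧ 2 ≤ N ∧ N ≤ 2 * (ℓ + 1) ∧
        k = M * (ℓ + 2) - N * (ℓ + 1)) ↔
      k ≤ ℓ ^ 2 + ℓ - 2 ∨ ∃ a : ℤ, 0 ≤ a ∧ a ≤ ℓ - 1 ∧
        ℓ ^ 2 + ℓ + a * (ℓ + 2) ≤ k ∧ k ≤ ℓ ^ 2 + 2 * ℓ - 1 + a * (ℓ + 1) := by
  constructor
  · rintro ⟨M, N, hM2, hM, hN2, hN, rfl⟩
    rcases le_or_gt (M - N) (ℓ - 2) with hd | hd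
    · left
      have := mul_le_mul_of_nonneg_right hd (show 0 ≤ ℓ + 1 by omega)
      linarith
    · exact Or.inr ⟨M - N - ℓ + 1, by omega, by omega, by linarith, by linarith⟩
  · rintro (h | ⟨a, ha0, ha, hl, hu⟩)
    · rcases le_or_gt k (ℓ - 1) with hs | hs
      · exact ⟨k + ℓ + 1, k + ℓ + 2, by omega, by omega, by omega, by omega, by ring⟩
      · -- Dividing `k - ℓ` by `ℓ + 1` gives `k = d (ℓ + 1) + M` with `ℓ ≤ M ≤ 2ℓ`, so that
        -- `d ≤ ℓ - 2` already ensures `M - d ≥ 2`.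
        have hL : 0 < ℓ + 1 := by omega
        have hr0 := Int.emod_nonneg (k - ℓ) hL.ne'
        have hr := Int.emod_lt_of_pos (k - ℓ) hL
        have hq0 : 0 ≤ (k - ℓ) / (ℓ + 1) := Int.ediv_nonneg (by omega) hL.le
        have hq : (k - ℓ) / (ℓ + 1) < ℓ - 1 := Int.ediv_lt_of_lt_mul hL (by linarith)
        have he := Int.emod_add_mul_ediv (k - ℓ) (ℓ + 1)
        exact ⟨(k - ℓ) % (ℓ + 1) + ℓ, (k - ℓ) % (ℓ + 1) + ℓ - (k - ℓ) / (ℓ + 1),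
          by omega, by omega, by omega, by omega, by linarith⟩
    · -- Here `d = a + ℓ - 1`, and `M = k - d (ℓ + 1)`.
      exact ⟨k - (a + ℓ - 1) * (ℓ + 1), k - (a + ℓ - 1) * (ℓ + 1) - (a + ℓ - 1),
        by linarith, by linarith, by linarith, by linarith, by ring⟩

/-- For `ℓ ≥ 2`, the set of nonzero values `|D⁺_{m,n;m',n'}|`, over
`1 ≤ m, m' ≤ ℓ` and `1 ≤ n, n' ≤ ℓ+1`, equals the union of the integer interval
`[1, ℓ²+ℓ−2]` with the intervals `B_ℓ(a) = [ℓ²+ℓ+a(ℓ+2), ℓ²+2ℓ−1+a(ℓ+1)]` for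
`0 ≤ a ≤ ℓ−1`. -/
theorem nonzero_Dplus_values (ℓ : ℤ) (hℓ : 2 ≤ ℓ) :
    {k : ℤ | k ≠ 0 ∧ ∃ m n m' n' : ℤ,
        1 ≤ m ∧ m ≤ ℓ ∧ 1 ≤ m' ∧ m' ≤ ℓ ∧ 1 ≤ n ∧ n ≤ ℓ + 1 ∧ 1 ≤ n' ∧ n' ≤ ℓ + 1 ∧
        k = |(m + m') * (ℓ + 2) - (n + n') * (ℓ + 1)|}
      = Set.Icc 1 (ℓ ^ 2 + ℓ - 2) ∪
        ⋃ a ∈ Set.Icc (0 : ℤ) (ℓ - 1),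
          Set.Icc (ℓ ^ 2 + ℓ + a * (ℓ + 2)) (ℓ ^ 2 + 2 * ℓ - 1 + a * (ℓ + 1)) := by
  ext k
  simp only [Set.mem_ofPred_eq, Set.mem_union, Set.mem_iUnion, Set.mem_Icc, exists_prop]
  constructor
  · rintro ⟨hk0, m, n, m', n', h1, h2, h3, h4, h5, h6, h7, h8, hk⟩
    have hk1 : 1 ≤ k := by
      have : 0 ≤ k := hk ▸ abs_nonneg _
      omega
    have key : ∃ M N : ℤ, 2 ≤ M ∧ M ≤ 2 * ℓ ∧ 2 ≤ N ∧ N ≤ 2 * (ℓ + 1) ∧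
        k = M * (ℓ + 2) - N * (ℓ + 1) := by
      rcases abs_choice ((m + m') * (ℓ + 2) - (n + n') * (ℓ + 1)) with h | h
      · exact ⟨m + m', n + n', by omega, by omega, by omega, by omega, hk.trans h⟩
      · exact ⟨2 * ℓ + 2 - (m + m'), 2 * ℓ + 4 - (n + n'), by omega, by omega, by omega,
          by omega, by rw [hk, h]; ring⟩
    rcases (pos_value_iff hℓ hk1).1 key with h | ⟨a, ha0, ha, h⟩
    · exact Or.inl ⟨hk1, h⟩
    · exact Or.inr ⟨a, ⟨ha0, ha⟩, h⟩
  · intro h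
    have hk1 : 1 ≤ k := by
      rcases h with h | ⟨a, ⟨ha0, -⟩, hl, -⟩
      · exact h.1
      · nlinarith [mul_nonneg ha0 (show 0 ≤ ℓ + 2 by omega)]
    obtain ⟨M, N, hM2, hM, hN2, hN, hk⟩ := (pos_value_iff hℓ hk1).2
      (h.imp And.right fun ⟨a, ⟨ha0, ha⟩, h⟩ => ⟨a, ha0, ha, h⟩)
    obtain ⟨m, m', h1, h2, h3, h4, rfl⟩ := exists_split hM2 hM
    obtain ⟨n, n', h5, h6, h7, h8, rfl⟩ := exists_split hN2 hN
    refine ⟨by omega, m, n, m', n', h1, h2, h3, h4, h5, h6, h7, h8, ?_⟩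
    rw [← hk, abs_of_pos (by omega)]
end

section
/- Let ℓ ≥ 2 be an integer and let B_ℓ be the set of values |D⁺_{m,n;m',n'}| as (m,n,m',n') ranges over 1 ≤ m, m' ≤ ℓ and 1 ≤ n, n' ≤ ℓ+1. Then 2ℓ²+ℓ−3 ∈ B_ℓ, and every element of B_ℓ other than 2(ℓ²+ℓ−1) is at most 2ℓ²+ℓ−3; that is, 2ℓ²+ℓ−3 is the second largest value in B_ℓ. -/
/-!
Put `a = m + m'` and `b = n + n'`, so that `2 ≤ a ≤ 2ℓ`, `2 ≤ b ≤ 2ℓ + 2` and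
`D = a(ℓ+2) - b(ℓ+1)`. The maximum `2(ℓ²+ℓ-1)` of `D` is attained only at the corner
`(a, b) = (2ℓ, 2)`. Leaving this corner costs at least `ℓ + 2` (lowering `a`) or `ℓ + 1` (raising
`b`), so every other value of `D` is at most `2ℓ²+ℓ-3`, which is attained at `(2ℓ, 3)`.
The reflection `(a, b) ↦ (2ℓ+2-a, 2ℓ+4-b)` preserves the ranges and changes the sign of `D`, so the
same bound holds for `-D`.
-/

/-- Away from the maximizing corner, `D` drops by at least `ℓ + 1`. -/
lemma eq_max_or_le (ℓ a b : ℤ) (hℓ : 2 ≤ ℓ) (ha : a ≤ 2 * ℓ) (hb : 2 ≤ b) :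
    a * (ℓ + 2) - b * (ℓ + 1) = 2 * (ℓ ^ 2 + ℓ - 1) ∨
      a * (ℓ + 2) - b * (ℓ + 1) ≤ 2 * ℓ ^ 2 + ℓ - 3 := by
  rcases ha.eq_or_lt with rfl | ha'
  · rcases hb.eq_or_lt with rfl | hb'
    · left; ring
    · right; nlinarith
  · right; nlinarith


/-- For `ℓ ≥ 2`, the second largest value of the set `B_ℓ` of values `|D⁺_{m,n;m',n'}|`
is `2ℓ²+ℓ−3`: it belongs to `B_ℓ`, and every element of `B_ℓ` other than `2(ℓ²+ℓ−1)`
is at most `2ℓ²+ℓ−3`. -/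
theorem second_max_of_Bl (ℓ : ℤ) (hℓ : 2 ≤ ℓ) :
    2 * ℓ ^ 2 + ℓ - 3 ∈
      {k : ℤ | ∃ m n m' n' : ℤ,
        1 ≤ m ∧ m ≤ ℓ ∧ 1 ≤ m' ∧ m' ≤ ℓ ∧ 1 ≤ n ∧ n ≤ ℓ + 1 ∧ 1 ≤ n' ∧ n' ≤ ℓ + 1 ∧
        k = |(m + m') * (ℓ + 2) - (n + n') * (ℓ + 1)|} ∧
    ∀ k ∈ {k : ℤ | ∃ m n m' n' : ℤ,
        1 ≤ m ∧ m ≤ ℓ ∧ 1 ≤ m' ∧ m' ≤ ℓ ∧ 1 ≤ n ∧ n ≤ ℓ + 1 ∧ 1 ≤ n' ∧ n' ≤ ℓ + 1 ∧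
        k = |(m + m') * (ℓ + 2) - (n + n') * (ℓ + 1)|},
      k ≠ 2 * (ℓ ^ 2 + ℓ - 1) → k ≤ 2 * ℓ ^ 2 + ℓ - 3 := by
  refine ⟨⟨ℓ, 1, ℓ, 2, by lia, by lia, by lia, by lia, by lia, by lia, by lia, by lia, ?_⟩, ?_⟩
  · rw [abs_of_nonneg (by nlinarith)]
    ring
  · rintro k ⟨m, n, m', n', hm, hm', hp, hp', hn, hn', hq, hq', rfl⟩ hne
    have h₁ := eq_max_or_le ℓ (m + m') (n + n') hℓ (by lia) (by lia)
    have h₂ := eq_max_or_le ℓ (2 * ℓ + 2 - (m + m')) (2 * ℓ + 4 - (n + n')) hℓ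
      (by lia) (by lia)
    have hneg : (2 * ℓ + 2 - (m + m')) * (ℓ + 2) - (2 * ℓ + 4 - (n + n')) * (ℓ + 1) =
        -((m + m') * (ℓ + 2) - (n + n') * (ℓ + 1)) := by ring
    rw [hneg] at h₂
    -- The absolute value is `D` or `-D`, and the matching alternative applies.
    rcases abs_choice ((m + m') * (ℓ + 2) - (n + n') * (ℓ + 1)) with h | h <;> rw [h] at hne ⊢
    · exact h₁.resolve_left hne
    · exact h₂.resolve_left hne
end

section
/- Let ℓ ≥ 2 be an integer and let B_ℓ be the set of values |D⁺_{m,n;m',n'}| as (m,n,m',n') ranges over 1 ≤ m, m' ≤ ℓ and 1 ≤ n, n' ≤ ℓ+1. Then (ℓ+1)² ∉ B_ℓ and (ℓ+2)² ∉ B_ℓ. -/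
/-!
Put `p = ℓ + 1`, `q = ℓ + 2`, `M = m + m' ∈ [2, 2p - 2]` and `N = n + n' ∈ [2, 2p] = [2, 2q - 2]`.
If `M q - N p = ± p²`, then `p ∣ M` because `q = p + 1`, so the range of `M` forces `M = p` and
hence `N = q ∓ p`, i.e. `N = 1` or `N = 2p + 1`, both out of range. Symmetrically, if
`M q - N p = ± q²`, then `q ∣ N`, so `N = q` and `M = p ± q`, i.e. `M = 2p + 1` or `M = -1`.
-/

/-- The only multiple of `p` strictly between `0` and `2p` is `p` itself; stated for the cofactor. -/
lemma cofactor_eq_one {p c x : ℤ} (hx : x = p * c) (h0 : 0 < x) (h1 : x < 2 * p) : c = 1 := by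
  have hp : 0 < p := by linarith
  have hc0 : 0 < c := by
    by_contra! h
    nlinarith
  have hc2 : c < 2 := by
    by_contra! h
    nlinarith
  omega

/-- For `ℓ ≥ 2`, neither `(ℓ+1)²` nor `(ℓ+2)²` belongs to the set `B_ℓ` of values
`|D⁺_{m,n;m',n'}|`. -/
theorem sq_not_mem_Bl (ℓ : ℤ) (hℓ : 2 ≤ ℓ) :
    (ℓ + 1) ^ 2 ∉
      {k : ℤ | ∃ m n m' n' : ℤ,
        1 ≤ m ∧ m ≤ ℓ ∧ 1 ≤ m' ∧ m' ≤ ℓ ∧ 1 ≤ n ∧ n ≤ ℓ + 1 ∧ 1 ≤ n' ∧ n' ≤ ℓ + 1 ∧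
        k = |(m + m') * (ℓ + 2) - (n + n') * (ℓ + 1)|} ∧
    (ℓ + 2) ^ 2 ∉
      {k : ℤ | ∃ m n m' n' : ℤ,
        1 ≤ m ∧ m ≤ ℓ ∧ 1 ≤ m' ∧ m' ≤ ℓ ∧ 1 ≤ n ∧ n ≤ ℓ + 1 ∧ 1 ≤ n' ∧ n' ≤ ℓ + 1 ∧
        k = |(m + m') * (ℓ + 2) - (n + n') * (ℓ + 1)|} := by
  constructor
  · rintro ⟨m, n, m', n', hm, hm1, hm', hm1', hn, hn1, hn', hn1', h⟩
    rcases abs_choice ((m + m') * (ℓ + 2) - (n + n') * (ℓ + 1)) with ha | ha <;> rw [ha] at h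
    · have hM : m + m' = (ℓ + 1) * (n + n' + (ℓ + 1) - (m + m')) := by linarith
      have hc := cofactor_eq_one hM (by linarith) (by linarith)
      rw [hc] at hM
      linarith
    · have hM : m + m' = (ℓ + 1) * (n + n' - (ℓ + 1) - (m + m')) := by linarith
      have hc := cofactor_eq_one hM (by linarith) (by linarith)
      rw [hc] at hM
      linarith
  · rintro ⟨m, n, m', n', hm, hm1, hm', hm1', hn, hn1, hn', hn1', h⟩
    rcases abs_choice ((m + m') * (ℓ + 2) - (n + n') * (ℓ + 1)) with ha | ha <;> rw [ha] at h
    · have hN : n + n' = (ℓ + 2) * (n + n' - (m + m') + (ℓ + 2)) := by linarith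
      have hc := cofactor_eq_one hN (by linarith) (by linarith)
      rw [hc] at hN
      linarith
    · have hN : n + n' = (ℓ + 2) * (n + n' - (m + m') - (ℓ + 2)) := by linarith
      have hc := cofactor_eq_one hN (by linarith) (by linarith)
      rw [hc] at hN
      linarith
end

section
/- Let ℓ ≥ 2 be an integer. The set of values |D⁻_{m,n;m',n'}| = |(m−m')(ℓ+2) − (n−n')(ℓ+1)|, as (m,n,m',n') ranges over integers with 1 ≤ m ≤ ℓ, 1 ≤ m' ≤ ℓ, 1 ≤ n ≤ ℓ+1, 1 ≤ n' ≤ ℓ+1, equals the set of values |D⁺_{m,n;m',n'}| = |(m+m')(ℓ+2) − (n+n')(ℓ+1)| over the same ranges of indices. -/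
/-- For `ℓ ≥ 2`, the set of values `|D⁻_{m,n;m',n'}|` equals the set of values
`|D⁺_{m,n;m',n'}|`, as `(m,n,m',n')` ranges over `1 ≤ m, m' ≤ ℓ`, `1 ≤ n, n' ≤ ℓ+1`. -/
theorem Dminus_values_eq_Dplus_values (ℓ : ℤ) (hℓ : 2 ≤ ℓ) :
    {k : ℤ | ∃ m n m' n' : ℤ,
        1 ≤ m ∧ m ≤ ℓ ∧ 1 ≤ m' ∧ m' ≤ ℓ ∧ 1 ≤ n ∧ n ≤ ℓ + 1 ∧ 1 ≤ n' ∧ n' ≤ ℓ + 1 ∧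
        k = |(m - m') * (ℓ + 2) - (n - n') * (ℓ + 1)|}
      = {k : ℤ | ∃ m n m' n' : ℤ,
        1 ≤ m ∧ m ≤ ℓ ∧ 1 ≤ m' ∧ m' ≤ ℓ ∧ 1 ≤ n ∧ n ≤ ℓ + 1 ∧ 1 ≤ n' ∧ n' ≤ ℓ + 1 ∧
        k = |(m + m') * (ℓ + 2) - (n + n') * (ℓ + 1)|} := by
  -- The Kac-table symmetry `(m', n') ↦ (ℓ + 1 - m', ℓ + 2 - n')` preserves the index ranges and
  -- exchanges `D⁻` with `D⁺`: the two shifts contribute `(ℓ + 1) * (ℓ + 2)` each and cancel.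
  ext k
  constructor
  all_goals
    rintro ⟨m, n, m', n', h1, h2, h3, h4, h5, h6, h7, h8, rfl⟩
    refine ⟨m, n, ℓ + 1 - m', ℓ + 2 - n', h1, h2, by linarith, by linarith, h5, h6,
      by linarith, by linarith, ?_⟩
    congr 1
    ring
end

section
/- Let ℓ ≥ 2 be an integer and let p be a prime. Suppose there exist pairs of integers (m,n) ≠ (m',n') with 1 ≤ n ≤ m ≤ ℓ and 1 ≤ n' ≤ m' ≤ ℓ such that p divides h̃_{m,n} − h̃_{m',n'}, where h̃_{m,n} = (m(ℓ+2) − n(ℓ+1))² − 1. Then p ≤ 2ℓ² + ℓ − 3 and p belongs to B_ℓ, the set of values |(m+m')(ℓ+2) − (n+n')(ℓ+1)| over 1 ≤ m, m' ≤ ℓ and 1 ≤ n, n' ≤ ℓ+1. -/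
/-!
Write `a(m,n) = m(ℓ+2) − n(ℓ+1) = m + (m−n)(ℓ+1)`. On the triangle `1 ≤ n ≤ m ≤ ℓ` the map `a` is
injective (reduce modulo `ℓ+1`) with values in `[1, ℓ²+ℓ−1]`; the maximum is attained only at
`(ℓ,1)` and all other values are at most `ℓ²−2`. If `p ∣ a² − a'²` with `a ≠ a'`, then `p` divides
`a + a'` or `a − a'`. Since `a + a' ≤ (ℓ²+ℓ−1) + (ℓ²−2)` and `0 < |a − a'| ≤ ℓ²+ℓ−2`, either
`p = a + a'`, which is in `B_ℓ` by definition, or `p ≤ ℓ²+ℓ−2`. The latter case is settled by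
`exists_repr_of_le`: every integer in `[0, ℓ²+ℓ−2]` belongs to `B_ℓ`.
-/

lemma exists_add_of_le {b M : ℤ} (h2 : 2 ≤ M) (hM : M ≤ 2 * b) :
    ∃ x y : ℤ, 1 ≤ x ∧ x ≤ b ∧ 1 ≤ y ∧ y ≤ b ∧ x + y = M := by
  by_cases h : M ≤ b + 1
  · exact ⟨M - 1, 1, by omega⟩
  · exact ⟨b, M - b, by omega⟩

/-- `a(m,n) ≤ ℓ² − 2` away from the corner `(ℓ,1)`. -/
lemma value_le_of_ne_corner {ℓ m n : ℤ} (hℓ : 2 ≤ ℓ) (h1 : 1 ≤ n) (hm : m ≤ ℓ)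
    (hne : ¬ (m = ℓ ∧ n = 1)) : m * (ℓ + 2) - n * (ℓ + 1) ≤ ℓ ^ 2 - 2 := by
  have h : m - n ≤ ℓ - 2 := by omega
  nlinarith [mul_le_mul_of_nonneg_right h (show 0 ≤ ℓ + 1 by omega)]

/-- `a` is injective on the triangle: `m` is determined modulo `ℓ + 1`. -/
lemma eq_of_value_eq {ℓ m n m' n' : ℤ} (h1 : 1 ≤ n) (h2 : n ≤ m) (h3 : m ≤ ℓ)
    (h1' : 1 ≤ n') (h2' : n' ≤ m') (h3' : m' ≤ ℓ)
    (h : m * (ℓ + 2) - n * (ℓ + 1) = m' * (ℓ + 2) - n' * (ℓ + 1)) : m = m' ∧ n = n' := by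
  have hd : (ℓ + 1) ∣ m - m' := ⟨(m' - n') - (m - n), by linarith⟩
  have hz : m - m' = 0 := Int.eq_zero_of_abs_lt_dvd hd (by rw [abs_lt]; omega)
  have hm : m = m' := by omega
  subst hm
  have hn : n * (ℓ + 1) = n' * (ℓ + 1) := by linarith
  exact ⟨rfl, mul_right_cancel₀ (by omega) hn⟩

/-- Every integer in `[0, ℓ²+ℓ−2]` lies in `B_ℓ`. -/
lemma exists_repr_of_le {ℓ k : ℤ} (hℓ : 2 ≤ ℓ) (h0 : 0 ≤ k) (hk : k ≤ ℓ ^ 2 + ℓ - 2) :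
    ∃ m n m' n' : ℤ,
        1 ≤ m ∧ m ≤ ℓ ∧ 1 ≤ m' ∧ m' ≤ ℓ ∧ 1 ≤ n ∧ n ≤ ℓ + 1 ∧ 1 ≤ n' ∧ n' ≤ ℓ + 1 ∧
        k = |(m + m') * (ℓ + 2) - (n + n') * (ℓ + 1)| := by
  suffices h : ∃ M N : ℤ, 2 ≤ M ∧ M ≤ 2 * ℓ ∧ 2 ≤ N ∧ N ≤ 2 * (ℓ + 1) ∧
      k = M * (ℓ + 2) - N * (ℓ + 1) by
    obtain ⟨M, N, hM, hM', hN, hN', h⟩ := h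
    obtain ⟨m, m', a1, a2, a3, a4, rfl⟩ := exists_add_of_le hM hM'
    obtain ⟨n, n', b1, b2, b3, b4, rfl⟩ := exists_add_of_le hN hN'
    exact ⟨m, n, m', n', a1, a2, a3, a4, b1, b2, b3, b4, by rw [← h, abs_of_nonneg h0]⟩
  obtain ⟨q, r, hq, hr, hr', hqr⟩ : ∃ q r : ℤ, 0 ≤ q ∧ 0 ≤ r ∧ r ≤ ℓ ∧ k = (ℓ + 1) * q + r :=
    ⟨k / (ℓ + 1), k % (ℓ + 1), Int.ediv_nonneg h0 (by omega), Int.emod_nonneg _ (by omega),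
      by have := Int.emod_lt_of_pos k (show 0 < ℓ + 1 by omega); omega,
      (Int.mul_ediv_add_emod k (ℓ + 1)).symm⟩
  have hqℓ : q ≤ ℓ - 1 := by
    by_contra! hc
    nlinarith
  by_cases hrℓ : r = ℓ
  · -- The remainder `ℓ` with quotient `ℓ - 1` would be `ℓ² + ℓ - 1`, just out of range.
    have hq2 : q ≤ ℓ - 2 := by
      by_contra! hc
      have hq1 : q = ℓ - 1 := by omega
      subst hq1 hrℓ
      nlinarith
    exact ⟨ℓ, ℓ - q, by omega, by omega, by omega, by omega, by rw [hqr, hrℓ]; ring⟩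
  · exact ⟨r + (ℓ + 1), r + (ℓ + 1) - (q - 1), by omega, by omega, by omega, by omega,
      by rw [hqr]; ring⟩


/-- Every `Vir|_{c_ℓ}`-bad prime `p` (a prime dividing `h̃_{m,n} − h̃_{m',n'}` for some
distinct pairs `(m,n) ≠ (m',n')` with `1 ≤ n ≤ m ≤ ℓ`, `1 ≤ n' ≤ m' ≤ ℓ`) satisfies
`p ≤ 2ℓ²+ℓ−3` and lies in the set `B_ℓ`. -/
theorem bad_prime_le_and_mem_Bl (ℓ : ℤ) (hℓ : 2 ≤ ℓ) (p : ℕ) (hp : p.Prime)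
    (hbad : ∃ m n m' n' : ℤ,
      1 ≤ n ∧ n ≤ m ∧ m ≤ ℓ ∧ 1 ≤ n' ∧ n' ≤ m' ∧ m' ≤ ℓ ∧ (m, n) ≠ (m', n') ∧
      (p : ℤ) ∣ ((m * (ℓ + 2) - n * (ℓ + 1)) ^ 2 - 1)
        - ((m' * (ℓ + 2) - n' * (ℓ + 1)) ^ 2 - 1)) :
    (p : ℤ) ≤ 2 * ℓ ^ 2 + ℓ - 3 ∧
    (p : ℤ) ∈ {k : ℤ | ∃ m n m' n' : ℤ,
        1 ≤ m ∧ m ≤ ℓ ∧ 1 ≤ m' ∧ m' ≤ ℓ ∧ 1 ≤ n ∧ n ≤ ℓ + 1 ∧ 1 ≤ n' ∧ n' ≤ ℓ + 1 ∧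
        k = |(m + m') * (ℓ + 2) - (n + n') * (ℓ + 1)|} := by
  obtain ⟨m, n, m', n', h1, h2, h3, h1', h2', h3', hne, hdvd⟩ := hbad
  have hne' : ¬ (m = m' ∧ n = n') := fun h => hne (by rw [h.1, h.2])
  set a := m * (ℓ + 2) - n * (ℓ + 1) with ha
  set b := m' * (ℓ + 2) - n' * (ℓ + 1) with hb
  have hab : a ≠ b := fun h => hne' (eq_of_value_eq h1 h2 h3 h1' h2' h3' h)
  have ha1 : 1 ≤ a := by nlinarith [mul_nonneg (sub_nonneg.2 h2) (show 0 ≤ ℓ + 1 by omega)]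
  have hb1 : 1 ≤ b := by nlinarith [mul_nonneg (sub_nonneg.2 h2') (show 0 ≤ ℓ + 1 by omega)]
  -- Each value is either the corner value `ℓ² + ℓ - 1` or at most `ℓ² - 2`.
  have ha2 : (m = ℓ ∧ n = 1 ∧ a = ℓ ^ 2 + ℓ - 1) ∨ a ≤ ℓ ^ 2 - 2 := by
    by_cases h : m = ℓ ∧ n = 1
    · exact Or.inl ⟨h.1, h.2, by rw [ha, h.1, h.2]; ring⟩
    · exact Or.inr (value_le_of_ne_corner hℓ h1 h3 h)
  have hb2 : (m' = ℓ ∧ n' = 1 ∧ b = ℓ ^ 2 + ℓ - 1) ∨ b ≤ ℓ ^ 2 - 2 := by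
    by_cases h : m' = ℓ ∧ n' = 1
    · exact Or.inl ⟨h.1, h.2, by rw [hb, h.1, h.2]; ring⟩
    · exact Or.inr (value_le_of_ne_corner hℓ h1' h3' h)
  have hsum : a + b ≤ 2 * ℓ ^ 2 + ℓ - 3 := by
    rcases ha2 with ⟨e1, e2, e⟩ | e <;> rcases hb2 with ⟨f1, f2, f⟩ | f
    · exact absurd ⟨e1.trans f1.symm, e2.trans f2.symm⟩ hne'
    all_goals linarith
  have hdiff : |a - b| ≤ ℓ ^ 2 + ℓ - 2 := by
    rw [abs_le]
    constructor <;> rcases ha2 with ⟨-, -, e⟩ | e <;> rcases hb2 with ⟨-, -, f⟩ | f <;> linarith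
  have key : (p : ℤ) = a + b ∨ (p : ℤ) ≤ ℓ ^ 2 + ℓ - 2 := by
    have hmul : (p : ℤ) ∣ (a + b) * (a - b) := by
      convert hdvd using 1
      ring
    rcases (Nat.prime_iff_prime_int.1 hp).dvd_or_dvd hmul with h | h
    · obtain ⟨c, hc⟩ := h
      have hp0 : (0 : ℤ) < p := by exact_mod_cast hp.pos
      have hc0 : 0 < c := pos_of_mul_pos_right (a := (p : ℤ)) (by omega) hp0.le
      rcases (show c = 1 ∨ 2 ≤ c by omega) with rfl | hc2
      · left
        linarith
      · -- A proper divisor of `a + b` is at most half of it.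
        right
        nlinarith
    · right
      exact (Int.le_of_dvd (abs_pos.2 (sub_ne_zero.2 hab)) ((dvd_abs _ _).2 h)).trans hdiff
  rcases key with h | h
  · refine ⟨h.le.trans hsum, m, n, m', n', by omega, h3, by omega, h3', h1, by omega, h1',
      by omega, ?_⟩
    have e : (m + m') * (ℓ + 2) - (n + n') * (ℓ + 1) = a + b := by rw [ha, hb]; ring
    rw [e, abs_of_nonneg (by omega), h]
  · exact ⟨by nlinarith, exists_repr_of_le hℓ (by positivity) h⟩
end

section
/- Let ℓ ≥ 2 be an integer and let B_ℓ be the set of values |(m+m')(ℓ+2) − (n+n')(ℓ+1)| over 1 ≤ m, m' ≤ ℓ and 1 ≤ n, n' ≤ ℓ+1. Then the complement of B_ℓ inside the integer interval [1, 2ℓ²+ℓ−3] equals the intersection of [1, 2ℓ²+ℓ−3] with the union of the integer intervals G_ℓ(a) = [ℓ²+ℓ−1+a(ℓ+1), ℓ²+ℓ−1+a(ℓ+2)] for a = 0, 1, …, ℓ−1; equivalently, it equals the union of the intervals G_ℓ(a) for a = 0, 1, …, ℓ−2. -/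
/-!
Put `p = ℓ + 1`, `M = m + m'`, `N = n + n'`, so that `M` ranges over `[2, 2p - 2]` and `N` over
`[2, 2p]`, and the quantity inside the absolute value is `d * p + M` with `d = M - N`.
For fixed `d ≥ 0` the constraints read `d + 2 ≤ M ≤ 2p - 2`, so the values fill the interval
`[d(p+1) + 2, dp + 2p - 2]`; for `d = -1` they fill `[2 - p, p - 2]`, whose positive part is that
of the same formula. The symmetry `M ↦ 2p - M`, `N ↦ 2p + 2 - N` sends `d` to `-d - 2` and
negates the value, so `d ≤ -2` gives nothing new after taking absolute values.
This is `mem_values_iff`.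

The gap between the intervals for `d` and `d + 1` is `[dp + 2p - 1, (d+1)(p+1) + 1]`, which is
`G_ℓ(a)` for `a = d + 3 - p`, and it is empty when `a < 0`. This is `not_mem_iff_gap`.
-/

/-- An integer of `[2, 2c]` is a sum of two integers of `[1, c]`. -/
lemma exists_add_eq (c M : ℤ) (h2 : 2 ≤ M) (hM : M ≤ 2 * c) :
    ∃ m m' : ℤ, 1 ≤ m ∧ m ≤ c ∧ 1 ≤ m' ∧ m' ≤ c ∧ m + m' = M :=
  ⟨min c (M - 1), M - min c (M - 1), by omega, by omega, by omega, by omega, by omega⟩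

/-- The positive elements of `B_ℓ` are the positive integers of the intervals
`[d(ℓ+2) + 2, (d+2)(ℓ+1) - 2]`,
`d ≥ -1`. -/
lemma mem_values_iff (ℓ k : ℤ) (hℓ : 2 ≤ ℓ) (hk : 1 ≤ k) :
    (∃ m n m' n' : ℤ,
      1 ≤ m ∧ m ≤ ℓ ∧ 1 ≤ m' ∧ m' ≤ ℓ ∧ 1 ≤ n ∧ n ≤ ℓ + 1 ∧ 1 ≤ n' ∧ n' ≤ ℓ + 1 ∧
      k = |(m + m') * (ℓ + 2) - (n + n') * (ℓ + 1)|) ↔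
    ∃ d : ℤ, -1 ≤ d ∧ d * (ℓ + 2) + 2 ≤ k ∧ k ≤ (d + 2) * (ℓ + 1) - 2 := by
  constructor
  · rintro ⟨m, n, m', n', h1, h2, h3, h4, h5, h6, h7, h8, h⟩
    have hx : (m + m') * (ℓ + 2) - (n + n') * (ℓ + 1)
        = (m + m' - (n + n')) * (ℓ + 1) + (m + m') := by ring
    rw [hx] at h
    obtain ⟨d, hd⟩ : ∃ d, d = m + m' - (n + n') := ⟨_, rfl⟩
    rw [← hd] at h
    -- The value has the sign of `d + 1`, except for `d = -1`, where both signs occur.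
    rcases le_or_gt (-1) d with hd1 | hd1
    · refine ⟨d, hd1, ?_⟩
      rcases eq_or_lt_of_le hd1 with rfl | hd0
      · rcases abs_cases (-1 * (ℓ + 1) + (m + m')) with ⟨h', _⟩ | ⟨h', _⟩ <;>
          constructor <;> linarith
      · have : 0 ≤ d * (ℓ + 1) := mul_nonneg (by omega) (by omega)
        rw [abs_of_nonneg (by linarith)] at h
        constructor <;> linarith
    · refine ⟨-d - 2, ?_⟩
      have : 0 ≤ (-d - 2) * (ℓ + 1) := mul_nonneg (by omega) (by omega)
      rw [abs_of_nonpos (by linarith)] at h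
      refine ⟨?_, ?_, ?_⟩ <;> linarith
  · rintro ⟨d, hd, hlo, hhi⟩
    -- `M = k - d(ℓ+1)`, `N = M - d`.
    have hM : 2 ≤ k - d * (ℓ + 1) := by
      rcases eq_or_lt_of_le hd with rfl | hd0
      · linarith
      · linarith [Int.add_one_le_iff.mpr hd0]
    obtain ⟨m, m', h1, h2, h3, h4, h⟩ := exists_add_eq ℓ (k - d * (ℓ + 1)) hM (by linarith)
    obtain ⟨n, n', h5, h6, h7, h8, h'⟩ := exists_add_eq (ℓ + 1) (k - d * (ℓ + 1) - d)
      (by linarith) (by linarith)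
    refine ⟨m, n, m', n', h1, h2, h3, h4, h5, h6, h7, h8, ?_⟩
    rw [h, h', show (k - d * (ℓ + 1)) * (ℓ + 2) - (k - d * (ℓ + 1) - d) * (ℓ + 1) = k by ring,
      abs_of_nonneg (by omega)]

/-- A positive integer misses all the intervals of `mem_values_iff` exactly when it lies in some
`G_ℓ(a)` with `a ≥ 0`. -/
lemma not_mem_iff_gap (ℓ k : ℤ) (hℓ : 2 ≤ ℓ) (hk : 1 ≤ k) :
    (¬ ∃ d : ℤ, -1 ≤ d ∧ d * (ℓ + 2) + 2 ≤ k ∧ k ≤ (d + 2) * (ℓ + 1) - 2) ↔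
    ∃ a : ℤ, 0 ≤ a ∧ ℓ ^ 2 + ℓ - 1 + a * (ℓ + 1) ≤ k ∧ k ≤ ℓ ^ 2 + ℓ - 1 + a * (ℓ + 2) := by
  constructor
  · intro h
    -- The largest `d` whose interval starts at or below `k`.
    obtain ⟨d, hd⟩ : ∃ d, d = (k - 2) / (ℓ + 2) := ⟨_, rfl⟩
    have hlo : d * (ℓ + 2) ≤ k - 2 := hd ▸ Int.ediv_mul_le _ (by omega)
    have hup : k - 2 < (d + 1) * (ℓ + 2) := hd ▸ Int.lt_ediv_add_one_mul_self _ (by omega)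
    have hd1 : -1 ≤ d := by
      rw [hd, Int.le_ediv_iff_mul_le (by omega)]
      linarith
    have hhi : (d + 2) * (ℓ + 1) - 2 < k := by
      by_contra hc
      exact h ⟨d, hd1, by linarith, by linarith⟩
    exact ⟨d + 2 - ℓ, by linarith, by linarith, by linarith⟩
  · rintro ⟨a, ha, h1, h2⟩ ⟨d, hd, h3, h4⟩
    -- The two intervals force `a + ℓ < d + 2` and `d < a + ℓ - 1`.
    have h5 : a + ℓ < d + 2 := by
      refine lt_of_mul_lt_mul_right (a := ℓ + 1) ?_ (by omega)
      linarith
    have h6 : d < a + ℓ - 1 := by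
      refine lt_of_mul_lt_mul_right (a := ℓ + 2) ?_ (by omega)
      linarith
    omega


/-- For `ℓ ≥ 2`, the complement of `B_ℓ` inside the integer interval `[1, 2ℓ²+ℓ−3]`
equals the intersection of `[1, 2ℓ²+ℓ−3]` with the union of the intervals
`G_ℓ(a) = [ℓ²+ℓ−1+a(ℓ+1), ℓ²+ℓ−1+a(ℓ+2)]` for `0 ≤ a ≤ ℓ−1`; equivalently, it equals
the union of the `G_ℓ(a)` for `0 ≤ a ≤ ℓ−2`. -/
theorem Gl_description (ℓ : ℤ) (hℓ : 2 ≤ ℓ) :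
    (Set.Icc (1 : ℤ) (2 * ℓ ^ 2 + ℓ - 3) \
        {k : ℤ | ∃ m n m' n' : ℤ,
          1 ≤ m ∧ m ≤ ℓ ∧ 1 ≤ m' ∧ m' ≤ ℓ ∧ 1 ≤ n ∧ n ≤ ℓ + 1 ∧ 1 ≤ n' ∧ n' ≤ ℓ + 1 ∧
          k = |(m + m') * (ℓ + 2) - (n + n') * (ℓ + 1)|}
      = Set.Icc (1 : ℤ) (2 * ℓ ^ 2 + ℓ - 3) ∩
          (⋃ a ∈ Set.Icc (0 : ℤ) (ℓ - 1),
            Set.Icc (ℓ ^ 2 + ℓ - 1 + a * (ℓ + 1)) (ℓ ^ 2 + ℓ - 1 + a * (ℓ + 2)))) ∧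
    (Set.Icc (1 : ℤ) (2 * ℓ ^ 2 + ℓ - 3) \
        {k : ℤ | ∃ m n m' n' : ℤ,
          1 ≤ m ∧ m ≤ ℓ ∧ 1 ≤ m' ∧ m' ≤ ℓ ∧ 1 ≤ n ∧ n ≤ ℓ + 1 ∧ 1 ≤ n' ∧ n' ≤ ℓ + 1 ∧
          k = |(m + m') * (ℓ + 2) - (n + n') * (ℓ + 1)|}
      = ⋃ a ∈ Set.Icc (0 : ℤ) (ℓ - 2),
          Set.Icc (ℓ ^ 2 + ℓ - 1 + a * (ℓ + 1)) (ℓ ^ 2 + ℓ - 1 + a * (ℓ + 2))) := by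
  have key : ∀ k : ℤ, 1 ≤ k → ((¬ ∃ m n m' n' : ℤ,
      1 ≤ m ∧ m ≤ ℓ ∧ 1 ≤ m' ∧ m' ≤ ℓ ∧ 1 ≤ n ∧ n ≤ ℓ + 1 ∧ 1 ≤ n' ∧ n' ≤ ℓ + 1 ∧
      k = |(m + m') * (ℓ + 2) - (n + n') * (ℓ + 1)|) ↔
      ∃ a : ℤ, 0 ≤ a ∧ ℓ ^ 2 + ℓ - 1 + a * (ℓ + 1) ≤ k ∧ k ≤ ℓ ^ 2 + ℓ - 1 + a * (ℓ + 2)) :=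
    fun k hk => by rw [mem_values_iff ℓ k hℓ hk, not_mem_iff_gap ℓ k hℓ hk]
  have bound : ∀ a k : ℤ, ℓ ^ 2 + ℓ - 1 + a * (ℓ + 1) ≤ k → k ≤ 2 * ℓ ^ 2 + ℓ - 3 →
      a ≤ ℓ - 2 := by
    intro a k h1 h2
    have : a < ℓ - 1 := by
      refine lt_of_mul_lt_mul_right (a := ℓ + 1) ?_ (by omega)
      linarith
    omega
  constructor
  · ext k
    simp only [Set.mem_sdiff, Set.mem_inter_iff, Set.mem_iUnion, Set.mem_Icc, Set.mem_ofPred_eq,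
      exists_prop]
    refine and_congr_right fun ⟨hk, hk'⟩ => (key k hk).trans ?_
    constructor
    · rintro ⟨a, ha, h1, h2⟩
      exact ⟨a, ⟨ha, by linarith [bound a k h1 hk']⟩, h1, h2⟩
    · rintro ⟨a, ⟨ha, _⟩, h1, h2⟩
      exact ⟨a, ha, h1, h2⟩
  · ext k
    simp only [Set.mem_sdiff, Set.mem_iUnion, Set.mem_Icc, Set.mem_ofPred_eq, exists_prop]
    constructor
    · rintro ⟨⟨hk, hk'⟩, h⟩
      obtain ⟨a, ha, h1, h2⟩ := (key k hk).mp h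
      exact ⟨a, ⟨ha, bound a k h1 hk'⟩, h1, h2⟩
    · rintro ⟨a, ⟨ha, ha'⟩, h1, h2⟩
      -- `G_ℓ(a)` with `0 ≤ a ≤ ℓ - 2` lies inside `[1, 2ℓ² + ℓ - 5]`.
      have h3 : 0 ≤ a * (ℓ + 1) := mul_nonneg ha (by omega)
      have h4 : a * (ℓ + 2) ≤ (ℓ - 2) * (ℓ + 2) := mul_le_mul_of_nonneg_right ha' (by omega)
      have hk : 1 ≤ k := by nlinarith
      exact ⟨⟨hk, by linarith⟩, (key k hk).mpr ⟨a, ha, h1, h2⟩⟩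
end
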